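/- Let β : ℝ → ℝ be smooth, let H : ℝ⁹ → ℝ be smooth, and let ψ : ℝ³ → ℝ be a smooth solution of ζ_t + ψ_x ζ_y − ψ_y ζ_x = H(t, x, y, ζ, ζ_x, ζ_y, ζ_xx, ζ_xy, ζ_yy), where ζ := ψ_xx + ψ_yy. Write c := cos β(t), s := sin β(t), and define ψ̃(t,x,y) := ψ(t, xc + ys, −xs + yc) + (β'(t)/2)(x² + y²) and H̃(t, x, y, w, w₁, w₂, w₁₁, w₁₂, w₂₂) := H(t, xc + ys, −xs + yc, w − 2β'(t), cw₁ + sw₂, −sw₁ + cw₂, c²w₁₁ + 2csw₁₂ + s²w₂₂, −csw₁₁ + (c² − s²)w₁₂ + csw₂₂, s²w₁₁ − 2csw₁₂ + c²w₂₂) + 2β''(t). Then ψ̃ is a smooth solution of ζ̃_t + ψ̃_x ζ̃_y − ψ̃_y ζ̃_x = H̃(t, x, y, ζ̃, ζ̃_x, ζ̃_y, ζ̃_xx, ζ̃_xy, ζ̃_yy), where ζ̃ := ψ̃_xx + ψ̃_yy. -/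

import Mathlib

noncomputable section

abbrev V9 := ℝ × ℝ × ℝ × ℝ × ℝ × ℝ × ℝ × ℝ × ℝ

/-- Partial derivative with respect to t. -/
def dT (f : ℝ × ℝ × ℝ → ℝ) (p : ℝ × ℝ × ℝ) : ℝ := fderiv ℝ f p (1, 0, 0)
/-- Partial derivative with respect to x. -/
def dX (f : ℝ × ℝ × ℝ → ℝ) (p : ℝ × ℝ × ℝ) : ℝ := fderiv ℝ f p (0, 1, 0)
/-- Partial derivative with respect to y. -/
def dY (f : ℝ × ℝ × ℝ → ℝ) (p : ℝ × ℝ × ℝ) : ℝ := fderiv ℝ f p (0, 0, 1)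

/-- The vorticity ζ := ψ_xx + ψ_yy. -/
def vort (ψ : ℝ × ℝ × ℝ → ℝ) : ℝ × ℝ × ℝ → ℝ := fun p => dX (dX ψ) p + dY (dY ψ) p

/-- ψ is a smooth solution of the generalized vorticity equation
ζ_t + ψ_x ζ_y − ψ_y ζ_x = H(t, x, y, ζ, ζ_x, ζ_y, ζ_xx, ζ_xy, ζ_yy). -/
def IsHVortSol (H : V9 → ℝ) (ψ : ℝ × ℝ × ℝ → ℝ) : Prop :=
  ContDiff ℝ (⊤ : ℕ∞) ψ ∧ ∀ p : ℝ × ℝ × ℝ,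
    dT (vort ψ) p + dX ψ p * dY (vort ψ) p - dY ψ p * dX (vort ψ) p
      = H (p.1, p.2.1, p.2.2, vort ψ p, dX (vort ψ) p, dY (vort ψ) p,
           dX (dX (vort ψ)) p, dX (dY (vort ψ)) p, dY (dY (vort ψ)) p)

/-- the rotation -/
def rotM (β : ℝ → ℝ) (p : ℝ × ℝ × ℝ) : ℝ × ℝ × ℝ :=
  (p.1, p.2.1 * Real.cos (β p.1) + p.2.2 * Real.sin (β p.1),
    -p.2.1 * Real.sin (β p.1) + p.2.2 * Real.cos (β p.1))

lemma curve_chain {f : ℝ × ℝ × ℝ → ℝ} (hf : Differentiable ℝ f) {u v w : ℝ → ℝ} {a b c s : ℝ}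
    (hu : HasDerivAt u a s) (hv : HasDerivAt v b s) (hw : HasDerivAt w c s) :
    HasDerivAt (fun r => f (u r, v r, w r))
      (a * dT f (u s, v s, w s) + b * dX f (u s, v s, w s) + c * dY f (u s, v s, w s)) s := by
  have h1 := (hf (u s, v s, w s)).hasFDerivAt.comp_hasDerivAt s (hu.prodMk (hv.prodMk hw))
  refine HasDerivAt.congr_deriv h1 ?_
  have : ((a, b, c) : ℝ × ℝ × ℝ) = a • (1, 0, 0) + b • (0, 1, 0) + c • (0, 0, 1) := by simp
  rw [this, map_add, map_add, map_smul, map_smul, map_smul]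
  rfl

lemma dX_eq {f : ℝ × ℝ × ℝ → ℝ} (hf : Differentiable ℝ f) {p : ℝ × ℝ × ℝ} {d : ℝ}
    (h : HasDerivAt (fun r => f (p.1, r, p.2.2)) d p.2.1) : dX f p = d := by
  have := (curve_chain hf (hasDerivAt_const p.2.1 p.1) (hasDerivAt_id p.2.1)
    (hasDerivAt_const p.2.1 p.2.2)).unique h
  simpa using this

lemma dY_eq {f : ℝ × ℝ × ℝ → ℝ} (hf : Differentiable ℝ f) {p : ℝ × ℝ × ℝ} {d : ℝ}
    (h : HasDerivAt (fun r => f (p.1, p.2.1, r)) d p.2.2) : dY f p = d := by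
  have := (curve_chain hf (hasDerivAt_const p.2.2 p.1) (hasDerivAt_const p.2.2 p.2.1)
    (hasDerivAt_id p.2.2)).unique h
  simpa using this

lemma dT_eq {f : ℝ × ℝ × ℝ → ℝ} (hf : Differentiable ℝ f) {p : ℝ × ℝ × ℝ} {d : ℝ}
    (h : HasDerivAt (fun r => f (r, p.2.1, p.2.2)) d p.1) : dT f p = d := by
  have := (curve_chain hf (hasDerivAt_id p.1) (hasDerivAt_const p.1 p.2.1)
    (hasDerivAt_const p.1 p.2.2)).unique h
  simpa using this

lemma rotM_diff {β : ℝ → ℝ} (hβ : Differentiable ℝ β) : Differentiable ℝ (rotM β) := by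
  unfold rotM; fun_prop

lemma F_diff {β a b k : ℝ → ℝ} {f g m : ℝ × ℝ × ℝ → ℝ} (hβ : Differentiable ℝ β)
    (ha : Differentiable ℝ a) (hb : Differentiable ℝ b) (hk : Differentiable ℝ k)
    (hf : Differentiable ℝ f) (hg : Differentiable ℝ g) (hm : Differentiable ℝ m) :
    Differentiable ℝ (fun p : ℝ × ℝ × ℝ =>
      a p.1 * f (rotM β p) + b p.1 * g (rotM β p) + k p.1 * m p) := by
  have := rotM_diff hβ
  fun_prop

lemma dX_rot {β : ℝ → ℝ} {f : ℝ × ℝ × ℝ → ℝ} (hf : Differentiable ℝ f) (p : ℝ × ℝ × ℝ) :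
    HasDerivAt (fun r => f (rotM β (p.1, r, p.2.2)))
     (Real.cos (β p.1) * dX f (rotM β p) - Real.sin (β p.1) * dY f (rotM β p)) p.2.1 := by
  have h1 : HasDerivAt (fun r => r * Real.cos (β p.1) + p.2.2 * Real.sin (β p.1))
    (Real.cos (β p.1)) p.2.1 := by
    simpa using ((hasDerivAt_id p.2.1).mul_const (Real.cos (β p.1))).add_const
      (p.2.2 * Real.sin (β p.1))
  have h2 : HasDerivAt (fun r => -r * Real.sin (β p.1) + p.2.2 * Real.cos (β p.1))
    (-Real.sin (β p.1)) p.2.1 := by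
    simpa using ((hasDerivAt_id p.2.1).neg.mul_const (Real.sin (β p.1))).add_const
      (p.2.2 * Real.cos (β p.1))
  refine HasDerivAt.congr_deriv (curve_chain hf (hasDerivAt_const p.2.1 p.1) h1 h2) ?_
  change _ * dT f (rotM β p) + _ * dX f (rotM β p) + _ * dY f (rotM β p) = _
  try simp only [rotM]
  ring

lemma dY_rot {β : ℝ → ℝ} {f : ℝ × ℝ × ℝ → ℝ} (hf : Differentiable ℝ f) (p : ℝ × ℝ × ℝ) :
    HasDerivAt (fun r => f (rotM β (p.1, p.2.1, r)))
     (Real.sin (β p.1) * dX f (rotM β p) + Real.cos (β p.1) * dY f (rotM β p)) p.2.2 := by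
  have h1 : HasDerivAt (fun r => p.2.1 * Real.cos (β p.1) + r * Real.sin (β p.1))
    (Real.sin (β p.1)) p.2.2 := by
    simpa using ((hasDerivAt_id p.2.2).mul_const (Real.sin (β p.1))).const_add
      (p.2.1 * Real.cos (β p.1))
  have h2 : HasDerivAt (fun r => -p.2.1 * Real.sin (β p.1) + r * Real.cos (β p.1))
    (Real.cos (β p.1)) p.2.2 := by
    simpa using ((hasDerivAt_id p.2.2).mul_const (Real.cos (β p.1))).const_add
      (-p.2.1 * Real.sin (β p.1))
  refine HasDerivAt.congr_deriv (curve_chain hf (hasDerivAt_const p.2.2 p.1) h1 h2) ?_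
  change _ * dT f (rotM β p) + _ * dX f (rotM β p) + _ * dY f (rotM β p) = _
  try simp only [rotM]
  ring

lemma dT_rot {β : ℝ → ℝ} (hβ : Differentiable ℝ β) {f : ℝ × ℝ × ℝ → ℝ}
    (hf : Differentiable ℝ f) (p : ℝ × ℝ × ℝ) :
    HasDerivAt (fun r => f (rotM β (r, p.2.1, p.2.2)))
     (dT f (rotM β p) + deriv β p.1 * ((rotM β p).2.2 * dX f (rotM β p)
       - (rotM β p).2.1 * dY f (rotM β p))) p.1 := by
  have hb := (hβ p.1).hasDerivAt
  have h1 := (hb.cos.const_mul p.2.1).add (hb.sin.const_mul p.2.2)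
  have h2 := (hb.sin.const_mul (-p.2.1)).add (hb.cos.const_mul p.2.2)
  refine HasDerivAt.congr_deriv (curve_chain hf (hasDerivAt_id p.1) h1 h2) ?_
  change _ * dT f (rotM β p) + _ * dX f (rotM β p) + _ * dY f (rotM β p) = _
  try simp only [rotM]
  ring

lemma dX_F {β a b k : ℝ → ℝ} {f g m : ℝ × ℝ × ℝ → ℝ} (hβ : Differentiable ℝ β)
    (ha : Differentiable ℝ a) (hb : Differentiable ℝ b) (hk : Differentiable ℝ k)
    (hf : Differentiable ℝ f) (hg : Differentiable ℝ g) (hm : Differentiable ℝ m)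
    (p : ℝ × ℝ × ℝ) {d : ℝ} (hd : HasDerivAt (fun r => m (p.1, r, p.2.2)) d p.2.1) :
    dX (fun p : ℝ × ℝ × ℝ => a p.1 * f (rotM β p) + b p.1 * g (rotM β p) + k p.1 * m p) p
    = a p.1 * (Real.cos (β p.1) * dX f (rotM β p) - Real.sin (β p.1) * dY f (rotM β p))
     + b p.1 * (Real.cos (β p.1) * dX g (rotM β p) - Real.sin (β p.1) * dY g (rotM β p))
     + k p.1 * d :=
  dX_eq (F_diff hβ ha hb hk hf hg hm)
    ((((dX_rot hf p).const_mul (a p.1)).add ((dX_rot hg p).const_mul (b p.1))).add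
      (hd.const_mul (k p.1)))

lemma dY_F {β a b k : ℝ → ℝ} {f g m : ℝ × ℝ × ℝ → ℝ} (hβ : Differentiable ℝ β)
    (ha : Differentiable ℝ a) (hb : Differentiable ℝ b) (hk : Differentiable ℝ k)
    (hf : Differentiable ℝ f) (hg : Differentiable ℝ g) (hm : Differentiable ℝ m)
    (p : ℝ × ℝ × ℝ) {d : ℝ} (hd : HasDerivAt (fun r => m (p.1, p.2.1, r)) d p.2.2) :
    dY (fun p : ℝ × ℝ × ℝ => a p.1 * f (rotM β p) + b p.1 * g (rotM β p) + k p.1 * m p) p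
    = a p.1 * (Real.sin (β p.1) * dX f (rotM β p) + Real.cos (β p.1) * dY f (rotM β p))
     + b p.1 * (Real.sin (β p.1) * dX g (rotM β p) + Real.cos (β p.1) * dY g (rotM β p))
     + k p.1 * d :=
  dY_eq (F_diff hβ ha hb hk hf hg hm)
    ((((dY_rot hf p).const_mul (a p.1)).add ((dY_rot hg p).const_mul (b p.1))).add
      (hd.const_mul (k p.1)))

lemma cd_apply {f : ℝ × ℝ × ℝ → ℝ} (hf : ContDiff ℝ (⊤ : ℕ∞) f) (v : ℝ × ℝ × ℝ) :
    ContDiff ℝ (⊤ : ℕ∞) (fun p => fderiv ℝ f p v) :=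
  (hf.fderiv_right (m := (⊤ : ℕ∞)) (by simp)).clm_apply contDiff_const

lemma cd_dX {f : ℝ × ℝ × ℝ → ℝ} (hf : ContDiff ℝ (⊤ : ℕ∞) f) : ContDiff ℝ (⊤ : ℕ∞) (dX f) :=
  cd_apply hf _
lemma cd_dY {f : ℝ × ℝ × ℝ → ℝ} (hf : ContDiff ℝ (⊤ : ℕ∞) f) : ContDiff ℝ (⊤ : ℕ∞) (dY f) :=
  cd_apply hf _
lemma cd_vort {f : ℝ × ℝ × ℝ → ℝ} (hf : ContDiff ℝ (⊤ : ℕ∞) f) :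
    ContDiff ℝ (⊤ : ℕ∞) (vort f) :=
  (cd_dX (cd_dX hf)).add (cd_dY (cd_dY hf))
lemma cd_diff {f : ℝ × ℝ × ℝ → ℝ} (hf : ContDiff ℝ (⊤ : ℕ∞) f) : Differentiable ℝ f :=
  hf.differentiable (by simp)

lemma dXY_comm {f : ℝ × ℝ × ℝ → ℝ} (hf : ContDiff ℝ (⊤ : ℕ∞) f) (p : ℝ × ℝ × ℝ) :
    dY (dX f) p = dX (dY f) p := by
  have hd : DifferentiableAt ℝ (fderiv ℝ f) p :=
    ((hf.fderiv_right (m := (⊤ : ℕ∞)) (by simp)).differentiable (by simp)) p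
  have hs : IsSymmSndFDerivAt ℝ f p :=
    hf.contDiffAt.isSymmSndFDerivAt (by
      rw [minSmoothness_of_isRCLikeNormedField]; exact WithTop.coe_le_coe.2 (le_top : (2 : ℕ∞) ≤ ⊤))
  have key : ∀ v w : ℝ × ℝ × ℝ,
      fderiv ℝ (fun q => fderiv ℝ f q v) p w = fderiv ℝ (fderiv ℝ f) p w v := by
    intro v w
    rw [fderiv_clm_apply hd (differentiableAt_const v)]
    simp
  change fderiv ℝ (fun q => fderiv ℝ f q _) p _ = fderiv ℝ (fun q => fderiv ℝ f q _) p _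
  rw [key, key]
  exact hs _ _

theorem time_dependent_rotation_equivalence
    (β : ℝ → ℝ) (hβ : ContDiff ℝ (⊤ : ℕ∞) β)
    (H : V9 → ℝ) (hH : ContDiff ℝ (⊤ : ℕ∞) H)
    (ψ : ℝ × ℝ × ℝ → ℝ) (h : IsHVortSol H ψ) :
    IsHVortSol
      (fun q => match q with
        | (t, x, y, w, w1, w2, w11, w12, w22) =>
          H (t, x * Real.cos (β t) + y * Real.sin (β t),
             -x * Real.sin (β t) + y * Real.cos (β t),
             w - 2 * deriv β t,
             Real.cos (β t) * w1 + Real.sin (β t) * w2,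
             -Real.sin (β t) * w1 + Real.cos (β t) * w2,
             Real.cos (β t) ^ 2 * w11 + 2 * Real.cos (β t) * Real.sin (β t) * w12
               + Real.sin (β t) ^ 2 * w22,
             -Real.cos (β t) * Real.sin (β t) * w11
               + (Real.cos (β t) ^ 2 - Real.sin (β t) ^ 2) * w12
               + Real.cos (β t) * Real.sin (β t) * w22,
             Real.sin (β t) ^ 2 * w11 - 2 * Real.cos (β t) * Real.sin (β t) * w12
               + Real.cos (β t) ^ 2 * w22)
          + 2 * deriv (deriv β) t)
      (fun p => ψ (p.1, p.2.1 * Real.cos (β p.1) + p.2.2 * Real.sin (β p.1),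
                   -p.2.1 * Real.sin (β p.1) + p.2.2 * Real.cos (β p.1))
        + deriv β p.1 / 2 * (p.2.1 ^ 2 + p.2.2 ^ 2)) := by
  obtain ⟨hψ, heq⟩ := h
  have hβ' : ContDiff ℝ (⊤ : ℕ∞) (deriv β) :=
    ((contDiff_infty_iff_deriv (𝕜 := ℝ)).1 hβ).2
  have dβ : Differentiable ℝ β := hβ.differentiable (by simp)
  have dβ' : Differentiable ℝ (deriv β) := hβ'.differentiable (by simp)
  have dc : Differentiable ℝ (fun t => Real.cos (β t)) := by fun_prop
  have ds : Differentiable ℝ (fun t => Real.sin (β t)) := by fun_prop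
  have dns : Differentiable ℝ (fun t => -Real.sin (β t)) := by fun_prop
  have d1 : Differentiable ℝ (fun _ : ℝ => (1:ℝ)) := by fun_prop
  have d0 : Differentiable ℝ (fun _ : ℝ => (0:ℝ)) := by fun_prop
  have dh : Differentiable ℝ (fun t => deriv β t / 2) := by fun_prop
  have d2 : Differentiable ℝ (fun t => 2 * deriv β t) := by fun_prop
  have dm : Differentiable ℝ (fun p : ℝ × ℝ × ℝ => p.2.1 ^ 2 + p.2.2 ^ 2) := by fun_prop
  have dmx : Differentiable ℝ (fun p : ℝ × ℝ × ℝ => p.2.1) := by fun_prop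
  have dmy : Differentiable ℝ (fun p : ℝ × ℝ × ℝ => p.2.2) := by fun_prop
  have dm1 : Differentiable ℝ (fun _ : ℝ × ℝ × ℝ => (1:ℝ)) := by fun_prop
  have hcs : ∀ t, Real.cos (β t) ^ 2 = 1 - Real.sin (β t) ^ 2 := fun t => Real.cos_sq' _
  constructor
  · have h1 : ContDiff ℝ (⊤ : ℕ∞) (fun p : ℝ × ℝ × ℝ => deriv β p.1) := hβ'.comp contDiff_fst
    fun_prop
  set Ψ : ℝ × ℝ × ℝ → ℝ := (fun p => ψ (p.1, p.2.1 * Real.cos (β p.1) + p.2.2 * Real.sin (β p.1),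
                   -p.2.1 * Real.sin (β p.1) + p.2.2 * Real.cos (β p.1))
        + deriv β p.1 / 2 * (p.2.1 ^ 2 + p.2.2 ^ 2)) with hΨ
  have e0 : Ψ = fun p => (fun _ => (1:ℝ)) p.1 * ψ (rotM β p) + (fun _ => (0:ℝ)) p.1 * ψ (rotM β p)
      + (fun t => deriv β t / 2) p.1 * (fun p : ℝ × ℝ × ℝ => p.2.1 ^ 2 + p.2.2 ^ 2) p := by
    funext p; simp [hΨ, rotM]
  have Dψ := cd_diff hψ
  have DX := cd_diff (cd_dX hψ)
  have DY := cd_diff (cd_dY hψ)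
  have hz := cd_vort hψ
  have Dz := cd_diff hz
  have DzX := cd_diff (cd_dX hz)
  have DzY := cd_diff (cd_dY hz)
  have eX : dX Ψ = fun p => (fun t => Real.cos (β t)) p.1 * dX ψ (rotM β p)
      + (fun t => -Real.sin (β t)) p.1 * dY ψ (rotM β p)
      + deriv β p.1 * (fun p : ℝ × ℝ × ℝ => p.2.1) p := by
    funext p
    rw [e0, dX_F dβ d1 d0 dh Dψ Dψ dm p
      (((hasDerivAt_id p.2.1).pow 2).add_const (p.2.2 ^ 2))]
    simp; ring
  have eY : dY Ψ = fun p => (fun t => Real.sin (β t)) p.1 * dX ψ (rotM β p)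
      + (fun t => Real.cos (β t)) p.1 * dY ψ (rotM β p)
      + deriv β p.1 * (fun p : ℝ × ℝ × ℝ => p.2.2) p := by
    funext p
    rw [e0, dY_F dβ d1 d0 dh Dψ Dψ dm p
      (((hasDerivAt_id p.2.2).pow 2).const_add (p.2.1 ^ 2))]
    simp; ring
  have eV : vort Ψ = fun p => (fun _ => (1:ℝ)) p.1 * vort ψ (rotM β p)
      + (fun _ => (0:ℝ)) p.1 * vort ψ (rotM β p)
      + (fun t => 2 * deriv β t) p.1 * (fun _ : ℝ × ℝ × ℝ => (1:ℝ)) p := by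
    funext p
    unfold vort
    rw [eX, eY, dX_F dβ dc dns dβ' DX DY dmx p (hasDerivAt_id p.2.1),
      dY_F dβ ds dc dβ' DX DY dmy p (hasDerivAt_id p.2.2), dXY_comm hψ]
    simp only []
    linear_combination (dX (dX ψ) (rotM β p) + dY (dY ψ) (rotM β p)) * hcs p.1
  have eVX : dX (vort Ψ) = fun p => (fun t => Real.cos (β t)) p.1 * dX (vort ψ) (rotM β p)
      + (fun t => -Real.sin (β t)) p.1 * dY (vort ψ) (rotM β p)
      + (fun _ => (0:ℝ)) p.1 * (fun _ : ℝ × ℝ × ℝ => (1:ℝ)) p := by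
    funext p
    rw [eV, dX_F dβ d1 d0 d2 Dz Dz dm1 p (hasDerivAt_const p.2.1 1)]
    simp only []; ring
  have eVY : dY (vort Ψ) = fun p => (fun t => Real.sin (β t)) p.1 * dX (vort ψ) (rotM β p)
      + (fun t => Real.cos (β t)) p.1 * dY (vort ψ) (rotM β p)
      + (fun _ => (0:ℝ)) p.1 * (fun _ : ℝ × ℝ × ℝ => (1:ℝ)) p := by
    funext p
    rw [eV, dY_F dβ d1 d0 d2 Dz Dz dm1 p (hasDerivAt_const p.2.2 1)]
    simp only []; ring
  have eVT : ∀ p, dT (vort Ψ) p = dT (vort ψ) (rotM β p)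
      + deriv β p.1 * ((rotM β p).2.2 * dX (vort ψ) (rotM β p)
       - (rotM β p).2.1 * dY (vort ψ) (rotM β p)) + 2 * deriv (deriv β) p.1 := by
    intro p
    have e1 : vort Ψ = fun p => vort ψ (rotM β p) + 2 * deriv β p.1 := by
      rw [eV]; funext p; simp
    have hd : Differentiable ℝ (vort Ψ) := by
      rw [eV]; exact F_diff dβ d1 d0 d2 Dz Dz dm1
    apply dT_eq hd
    rw [e1]
    exact (dT_rot dβ Dz p).add ((dβ' p.1).hasDerivAt.const_mul 2)
  intro p
  have hp := heq (rotM β p)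
  have k := hcs p.1
  have eXX : dX (dX (vort Ψ)) p = _ :=
    (congrArg (fun F => dX F p) eVX).trans (dX_F dβ dc dns d0 DzX DzY dm1 p (hasDerivAt_const p.2.1 1))
  have eXY : dX (dY (vort Ψ)) p = _ :=
    (congrArg (fun F => dX F p) eVY).trans (dX_F dβ ds dc d0 DzX DzY dm1 p (hasDerivAt_const p.2.1 1))
  have eYY : dY (dY (vort Ψ)) p = _ :=
    (congrArg (fun F => dY F p) eVY).trans (dY_F dβ ds dc d0 DzX DzY dm1 p (hasDerivAt_const p.2.2 1))
  rw [dXY_comm hz] at eXX eXY eYY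
  rw [eXX, eXY, eYY, eVT p, eVX, eVY, eX, eY, eV]
  simp only []
  generalize hA : dX (dX (vort ψ)) (rotM β p) = A at *
  generalize hB : dX (dY (vort ψ)) (rotM β p) = B at *
  generalize hC : dY (dY (vort ψ)) (rotM β p) = C at *
  generalize hzx : dX (vort ψ) (rotM β p) = zx at *
  generalize hzy : dY (vort ψ) (rotM β p) = zy at *
  generalize hzt : dT (vort ψ) (rotM β p) = zt at *
  generalize hzz : vort ψ (rotM β p) = z at *
  generalize hpx : dX ψ (rotM β p) = px at *
  generalize hpy : dY ψ (rotM β p) = py at *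
  simp only [rotM] at hp ⊢
  generalize Real.cos (β p.1) = c at *
  generalize Real.sin (β p.1) = s at *
  have k1 : c ^ 2 + s ^ 2 = 1 := by linarith
  have k2 : (c ^ 2 + s ^ 2) ^ 2 = 1 := by rw [k1]; norm_num
  trans H (p.1, p.2.1 * c + p.2.2 * s, -p.2.1 * s + p.2.2 * c, z, zx, zy, A, B, C)
    + 2 * deriv (deriv β) p.1
  · rw [← hp]
    linear_combination (px * zy - py * zx) * k1
  · congr 2
    simp only [Prod.mk.injEq, true_and]
    refine ⟨?_, ?_, ?_, ?_, ?_, ?_⟩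
    · ring
    · linear_combination (-zx) * k1
    · linear_combination (-zy) * k1
    · linear_combination (-A) * k2
    · linear_combination (-B) * k2
    · linear_combination (-C) * k2
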